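/- arXiv:0808.1095 — 2 statements merged into one kernel-verified Lean document; each statement's English description precedes it below -/
import Mathlib

section
/- Let F be a field and let S be a finitely generated subring of F (i.e. finitely generated as a ℤ-algebra). Then there exists a subring S' of F containing S which is finitely generated as an S-algebra and such that E₂(S') is a finitely generated group. -/
/-!
Adjoin to `S` the inverses of its nonzero generators. The resulting ring `S'` is generated, as a
ring, by a finite set `U` of units that is closed under inversion.

Let `P` be the finite set of products of subsets of `U`, and let `G` be the group generated by the
`E₁₂(p)` and `E₂₁(p)` with `p ∈ P`. The elements `r` with `E₁₂(r), E₂₁(r) ∈ G` form an additive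
subgroup `M` of `F` containing `P`. For `u ∈ U` the group `G` contains the Weyl element
`w(u) = E₁₂(u) E₂₁(-u⁻¹) E₁₂(u)`, and conjugation by `w(u)` and `w(u⁻¹)` shows that `M` is stable
under multiplication by `u²` (`sq_mul_mem_elemEntries`). Every monomial in `U` is an element of `P`
times the square of a monomial (`exists_prod_mul_sq`), so `M` contains all monomials, hence all of
`S'`; that is, `G = E₂(S')`.
-/

open Matrix Pointwise

noncomputable section

/-- `SL₂` over a commutative ring. -/
abbrev SL2 (A : Type*) [CommRing A] := Matrix.SpecialLinearGroup (Fin 2) A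

/-- The elementary matrix `E₁₂(r) = [[1, r], [0, 1]]`. -/
def E12 {A : Type*} [CommRing A] (r : A) : SL2 A :=
  ⟨!![1, r; 0, 1], by simp [Matrix.det_fin_two_of]⟩

/-- The elementary matrix `E₂₁(r) = [[1, 0], [r, 1]]`. -/
def E21 {A : Type*} [CommRing A] (r : A) : SL2 A :=
  ⟨!![1, 0; r, 1], by simp [Matrix.det_fin_two_of]⟩

/-- `SL₂(S)` identified with the subgroup of `SL₂(F)` of matrices with entries in the
subring `S` of the field `F` (the image of `SL₂(S) → SL₂(F)`). -/
def SL2In {F : Type*} [Field F] (S : Subring F) : Subgroup (SL2 F) :=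
  (Matrix.SpecialLinearGroup.map S.subtype).range

/-- `E₂(S)`: the subgroup of `SL₂(F)` generated by the elementary matrices with
entry in the subring `S`. -/
def E2 {F : Type*} [Field F] (S : Subring F) : Subgroup (SL2 F) :=
  Subgroup.closure {g | ∃ r ∈ S, g = E12 r ∨ g = E21 r}

/-- The set `D(1/π,1)·Γ·D(π,1)` of conjugates inside `SL₂(F)`. -/
def conjSet {F : Type*} [Field F] (π : F) (Γ : Subgroup (SL2 F)) : Set (SL2 F) :=
  {g | ∃ h ∈ Γ, (g : Matrix (Fin 2) (Fin 2) F) =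
    !![π⁻¹, 0; 0, 1] * (h : Matrix (Fin 2) (Fin 2) F) * !![π, 0; 0, 1]}

section Helpers

variable {F : Type*} [Field F]

lemma E12_add (r s : F) : E12 (r + s) = E12 r * E12 s := by
  apply Subtype.ext
  rw [Matrix.SpecialLinearGroup.coe_mul]
  simp [E12, add_comm]

lemma E21_add (r s : F) : E21 (r + s) = E21 r * E21 s := by
  apply Subtype.ext
  rw [Matrix.SpecialLinearGroup.coe_mul]
  simp [E21]

lemma E12_zero : E12 (0 : F) = 1 := by
  ext i j; fin_cases i <;> fin_cases j <;> simp [E12]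

lemma E21_zero : E21 (0 : F) = 1 := by
  ext i j; fin_cases i <;> fin_cases j <;> simp [E21]

lemma E12_neg (r : F) : E12 (-r) = (E12 r)⁻¹ :=
  eq_inv_of_mul_eq_one_left (by rw [← E12_add, neg_add_cancel, E12_zero])

lemma E21_neg (r : F) : E21 (-r) = (E21 r)⁻¹ :=
  eq_inv_of_mul_eq_one_left (by rw [← E21_add, neg_add_cancel, E21_zero])

/-- The additive subgroup of those `r` for which both elementary matrices with entry `r` lie in
`G`. -/
def elemEntries (G : Subgroup (SL2 F)) : AddSubgroup F where
  carrier := {r | E12 r ∈ G ∧ E21 r ∈ G}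
  zero_mem' := by simp [E12_zero, E21_zero, G.one_mem]
  add_mem' := fun ha hb => by
    simp only [Set.mem_ofPred_eq, E12_add, E21_add]
    exact ⟨G.mul_mem ha.1 hb.1, G.mul_mem ha.2 hb.2⟩
  neg_mem' := fun ha => by
    simp only [Set.mem_ofPred_eq, E12_neg, E21_neg]
    exact ⟨G.inv_mem ha.1, G.inv_mem ha.2⟩

/-- The Weyl element `[[0, u], [-u⁻¹, 0]]` (for `u ≠ 0`), as a product of elementary matrices. -/
def weyl (u : F) : SL2 F := E12 u * E21 (-u⁻¹) * E12 u

lemma weyl_coe {u : F} (hu : u ≠ 0) :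
    (weyl u : Matrix (Fin 2) (Fin 2) F) = !![0, u; -u⁻¹, 0] := by
  rw [weyl, Matrix.SpecialLinearGroup.coe_mul, Matrix.SpecialLinearGroup.coe_mul]
  simp [E12, E21, hu]

lemma weyl_mul_E12 {u : F} (hu : u ≠ 0) (r : F) :
    weyl u * E12 r = E21 (-((u⁻¹) ^ 2 * r)) * weyl u := by
  apply Subtype.ext
  rw [Matrix.SpecialLinearGroup.coe_mul, Matrix.SpecialLinearGroup.coe_mul, weyl_coe hu]
  simp only [E12, E21]
  ext i j; fin_cases i <;> fin_cases j <;> simp <;> field_simp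

lemma weyl_mul_E21 {u : F} (hu : u ≠ 0) (r : F) :
    weyl u * E21 r = E12 (-(u ^ 2 * r)) * weyl u := by
  apply Subtype.ext
  rw [Matrix.SpecialLinearGroup.coe_mul, Matrix.SpecialLinearGroup.coe_mul, weyl_coe hu]
  simp only [E12, E21]
  ext i j; fin_cases i <;> fin_cases j <;> simp <;> field_simp

lemma weyl_mem {G : Subgroup (SL2 F)} {u : F} (h : u ∈ elemEntries G)
    (h' : u⁻¹ ∈ elemEntries G) : weyl u ∈ G :=
  G.mul_mem (G.mul_mem h.1 ((elemEntries G).neg_mem h').2) h.1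

lemma sq_mul_mem_elemEntries {G : Subgroup (SL2 F)} {u r : F} (hu : u ≠ 0)
    (h : u ∈ elemEntries G) (h' : u⁻¹ ∈ elemEntries G) (hr : r ∈ elemEntries G) :
    u ^ 2 * r ∈ elemEntries G := by
  rw [← neg_mem_iff]
  constructor
  · have hw := weyl_mem h h'
    rw [← G.mul_mem_cancel_right hw, ← weyl_mul_E21 hu]
    exact G.mul_mem hw hr.2
  · have hw := weyl_mem h' (by rwa [inv_inv])
    have key := weyl_mul_E12 (inv_ne_zero hu) r
    rw [inv_inv] at key
    rw [← G.mul_mem_cancel_right hw, ← key]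
    exact G.mul_mem hw hr.1

/-- Modulo squares of monomials, every monomial in `U` is a squarefree one. -/
lemma exists_prod_mul_sq [DecidableEq F] (U : Finset F) {x : F}
    (hx : x ∈ Submonoid.closure (U : Set F)) :
    ∃ A ⊆ U, ∃ y ∈ Submonoid.closure (U : Set F), x = y ^ 2 * ∏ a ∈ A, a := by
  induction hx using Submonoid.closure_induction_right with
  | one => exact ⟨∅, by simp, 1, Submonoid.one_mem _, by simp⟩
  | mul_right x hx u hu ih =>
    obtain ⟨A, hA, y, hy, rfl⟩ := ih
    by_cases huA : u ∈ A
    · refine ⟨A.erase u, (A.erase_subset u).trans hA, y * u,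
        Submonoid.mul_mem _ hy (Submonoid.subset_closure hu), ?_⟩
      rw [← Finset.mul_prod_erase A (fun a => a) huA]
      ring
    · refine ⟨insert u A, Finset.insert_subset hu hA, y, hy, ?_⟩
      rw [Finset.prod_insert huA]
      ring

lemma E2_closure_fg (U : Finset F) (h0 : ∀ u ∈ U, u ≠ 0) (hinv : ∀ u ∈ U, u⁻¹ ∈ U) :
    (E2 (Subring.closure (U : Set F))).FG := by
  classical
  let P : Finset F := U.powerset.image fun A => ∏ a ∈ A, a
  have hP : ∀ A ⊆ U, ∏ a ∈ A, a ∈ P := fun A hA =>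
    Finset.mem_image_of_mem _ (Finset.mem_powerset.mpr hA)
  refine ⟨P.image E12 ∪ P.image E21, le_antisymm ?_ ?_⟩
  · rw [Subgroup.closure_le]
    have hPS : ∀ p ∈ P, p ∈ Subring.closure (U : Set F) := by
      intro p hp
      obtain ⟨A, hA, rfl⟩ := Finset.mem_image.mp hp
      exact Subring.prod_mem _ fun a ha =>
        Subring.subset_closure (Finset.mem_powerset.mp hA ha)
    intro g hg
    simp only [Finset.coe_union, Finset.coe_image, Set.mem_union, Set.mem_image,
      Finset.mem_coe] at hg
    rcases hg with ⟨p, hp, rfl⟩ | ⟨p, hp, rfl⟩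
    · exact Subgroup.subset_closure ⟨p, hPS p hp, Or.inl rfl⟩
    · exact Subgroup.subset_closure ⟨p, hPS p hp, Or.inr rfl⟩
  · set G := Subgroup.closure (↑(P.image E12 ∪ P.image E21) : Set (SL2 F)) with hG
    have hPG : ∀ p ∈ P, p ∈ elemEntries G := fun p hp =>
      ⟨Subgroup.subset_closure (by
          simpa using Or.inl ⟨p, hp, rfl⟩),
        Subgroup.subset_closure (by
          simpa using Or.inr ⟨p, hp, rfl⟩)⟩
    have hUG : ∀ u ∈ U, u ∈ elemEntries G := fun u hu =>
      hPG u (by simpa using hP {u} (by simpa using hu))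
    have hsq : ∀ y ∈ Submonoid.closure (U : Set F), ∀ r ∈ elemEntries G,
        y ^ 2 * r ∈ elemEntries G := by
      intro y hy
      induction hy using Submonoid.closure_induction with
      | mem u hu =>
        exact fun r hr =>
          sq_mul_mem_elemEntries (h0 u hu) (hUG u hu) (hUG _ (hinv u hu)) hr
      | one => intro r hr; simpa using hr
      | mul a b _ _ iha ihb =>
        intro r hr
        rw [mul_pow, mul_assoc]
        exact iha _ (ihb _ hr)
    have hS : ∀ r ∈ Subring.closure (U : Set F), r ∈ elemEntries G := by
      intro r hr
      rw [Subring.mem_closure_iff] at hr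
      refine (AddSubgroup.closure_le _).mpr ?_ hr
      intro x hx
      obtain ⟨A, hA, y, hy, rfl⟩ := exists_prod_mul_sq U hx
      exact hsq y hy _ (hPG _ (hP A hA))
    rw [E2, Subgroup.closure_le]
    rintro g ⟨r, hr, rfl | rfl⟩
    · exact (hS r hr).1
    · exact (hS r hr).2

end Helpers

/-- Every finitely generated subring `S` of a field `F` is contained in a
subring `S'` of `F` which is finitely generated as an `S`-algebra (i.e. generated as a ring
by `S` and finitely many further elements) and such that `E₂(S')` is a finitely generated
group. -/
theorem statement15 (F : Type*) [Field F] (S : Subring F)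
    (hS : ∃ T : Finset F, S = Subring.closure (↑T : Set F)) :
    ∃ S' : Subring F, S ≤ S' ∧
      (∃ T' : Finset F, S' = Subring.closure ((↑S : Set F) ∪ ↑T')) ∧
      (E2 S').FG := by
  classical
  obtain ⟨T, rfl⟩ := hS
  -- The generator `0` is superfluous; the others become units of `S'`.
  let V : Finset F := T.erase 0
  let U : Finset F := V ∪ V.image (·⁻¹)
  have hTU : Subring.closure (T : Set F) ≤ Subring.closure (U : Set F) := by
    rw [Subring.closure_le]
    intro t ht
    by_cases h : t = 0
    · rw [h]; exact Subring.zero_mem _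
    · exact Subring.subset_closure
        (Finset.mem_union_left _ (Finset.mem_erase.mpr ⟨h, ht⟩))
  refine ⟨Subring.closure (U : Set F), hTU, ⟨V.image (·⁻¹), le_antisymm ?_ ?_⟩,
    E2_closure_fg U ?_ ?_⟩
  · rw [Subring.closure_le]
    intro u hu
    rcases Finset.mem_union.mp hu with h | h
    · exact Subring.subset_closure
        (Or.inl (Subring.subset_closure (Finset.mem_of_mem_erase h)))
    · exact Subring.subset_closure (Or.inr h)
  · rw [Subring.closure_le]
    rintro u (h | h)
    · exact hTU h
    · exact Subring.subset_closure (Finset.mem_union_right _ h)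
  · intro u hu
    rcases Finset.mem_union.mp hu with h | h
    · exact Finset.ne_of_mem_erase h
    · obtain ⟨v, hv, rfl⟩ := Finset.mem_image.mp h
      exact inv_ne_zero (Finset.ne_of_mem_erase hv)
  · intro u hu
    rcases Finset.mem_union.mp hu with h | h
    · exact Finset.mem_union_right _ (Finset.mem_image_of_mem _ h)
    · obtain ⟨v, hv, rfl⟩ := Finset.mem_image.mp h
      exact Finset.mem_union_left _ (by simpa using hv)
end
end

section
/- Let R be a finitely generated integral domain with field of fractions F. Then the following are equivalent: (1) there exists a finitely generated group Γ with SL₂(R) ≤ Γ ≤ SL₂(F); (2) there exists a subring S of F containing R which is finitely generated as an R-algebra and such that SL₂(R) ≤ E₂(S). -/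
/-!
Two facts carry the equivalence.

* Over a field every matrix of `SL₂` is a product of elementary matrices, and only finitely many
  entries occur in such a product (`exists_finset_mem_E2`). Adjoining to `R` the entries needed for
  a finite generating set of `Γ` gives a finitely generated `S` with `Γ ≤ E₂(S)`.

* If `S ⊆ F` is finitely generated as a ring, then `E₂(S)` lies in a finitely generated subgroup of
  `SL₂(F)` (`exists_fg_E2_le`). Let `T` be a finite set of ring generators of `S`. Conjugation by
  `diag(t, t⁻¹)` turns `E₁₂(r)` into `E₁₂(t² r)`, and `S` is generated as a module over
  `ℤ[t² : t ∈ T]` by the finitely many squarefree monomials in `T`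
  (`adjoin_le_of_sq_mul_mem`). Hence the matrices `diag(t, t⁻¹)` with `0 ≠ t ∈ T`, together with
  the elementary matrices of squarefree monomials, generate a group containing `E₂(S)`. The
  inverses `t⁻¹` need not lie in `S`, since any subgroup of `SL₂(F)` is allowed.
-/

open Matrix Pointwise

noncomputable section

section Elementary

variable {F : Type*} [Field F]

lemma coe_E12 (r : F) : (E12 r : Matrix (Fin 2) (Fin 2) F) = !![1, r; 0, 1] := rfl

lemma coe_E21 (r : F) : (E21 r : Matrix (Fin 2) (Fin 2) F) = !![1, 0; r, 1] := rfl

lemma E12_mem_E2 {S : Subring F} {r : F} (h : r ∈ S) : E12 r ∈ E2 S :=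
  Subgroup.subset_closure ⟨r, h, Or.inl rfl⟩

lemma E21_mem_E2 {S : Subring F} {r : F} (h : r ∈ S) : E21 r ∈ E2 S :=
  Subgroup.subset_closure ⟨r, h, Or.inr rfl⟩

lemma eq_E12_mul_E21_mul_E12 (g : SL2 F) (h : g 1 0 ≠ 0) :
    g = E12 ((g 0 0 - 1) / g 1 0) * E21 (g 1 0) * E12 ((g 1 1 - 1) / g 1 0) := by
  have hd := g.det_coe
  rw [Matrix.det_fin_two] at hd
  ext i j
  fin_cases i <;> fin_cases j <;>
    simp [coe_E12, coe_E21] <;> field_simp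
  · ring
  · linear_combination -hd
  · ring

/-- Every matrix of `SL₂(F)` is a product of elementary matrices, recorded here with a finite set
of entries sufficing for the factorization. -/
lemma exists_finset_mem_E2 (g : SL2 F) :
    ∃ A : Finset F, ∀ S : Subring F, (A : Set F) ⊆ S → g ∈ E2 S := by
  classical
  -- The case of nonzero lower left entry.
  have key : ∀ g : SL2 F, g 1 0 ≠ 0 →
      ∃ A : Finset F, ∀ S : Subring F, (A : Set F) ⊆ S → g ∈ E2 S := by
    intro g h
    refine ⟨{(g 0 0 - 1) / g 1 0, g 1 0, (g 1 1 - 1) / g 1 0}, fun S hS => ?_⟩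
    rw [eq_E12_mul_E21_mul_E12 g h]
    exact mul_mem (mul_mem (E12_mem_E2 (hS (by simp))) (E21_mem_E2 (hS (by simp))))
      (E12_mem_E2 (hS (by simp)))
  by_cases h : g 1 0 = 0
  · have hd := g.det_coe
    rw [Matrix.det_fin_two, h] at hd
    -- Adding the first row to the second makes the lower left entry nonzero.
    obtain ⟨A, hA⟩ := key (E21 1 * g) (by
      intro h0
      simp [coe_E21, Matrix.mul_apply, Fin.sum_univ_two, h] at h0
      simp [h0] at hd)
    exact ⟨A, fun S hS => ((E2 S).mul_mem_cancel_left (E21_mem_E2 S.one_mem)).1 (hA S hS)⟩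
  · exact key g h

lemma E2_mono {S S' : Subring F} (h : S ≤ S') : E2 S ≤ E2 S' :=
  Subgroup.closure_mono fun _ ⟨r, hr, hg⟩ => ⟨r, h hr, hg⟩

end Elementary

section FinitelyGenerated

variable {F : Type*} [Field F]

/-- The ring `ℤ[T]` is generated by the squarefree monomials in `T` as a module over
`ℤ[t² : t ∈ T]`. -/
lemma adjoin_le_of_sq_mul_mem (T : Finset F) (M : AddSubgroup F)
    (hB : ∀ U ⊆ T, ∏ t ∈ U, t ∈ M) (hM : ∀ t ∈ T, ∀ r ∈ M, t ^ 2 * r ∈ M) :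
    ∀ x ∈ Algebra.adjoin ℤ (T : Set F), x ∈ M := by
  classical
  have hsq : ∀ s ∈ Submonoid.closure ((fun t : F => t ^ 2) '' (T : Set F)),
      ∀ r ∈ M, s * r ∈ M := by
    intro s hs
    induction hs using Submonoid.closure_induction with
    | mem x hx =>
      obtain ⟨t, ht, rfl⟩ := hx
      exact hM t ht
    | one => simp
    | mul x y _ _ hx hy =>
      intro r hr
      rw [mul_assoc]
      exact hx _ (hy _ hr)
  have hmon : ∀ x ∈ Submonoid.closure (T : Set F),
      ∃ s ∈ Submonoid.closure ((fun t : F => t ^ 2) '' (T : Set F)),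
        ∃ U ⊆ T, x = s * ∏ t ∈ U, t := by
    intro x hx
    induction hx using Submonoid.closure_induction_left with
    | one => exact ⟨1, one_mem _, ∅, by simp, by simp⟩
    | mul_left x hx y _ ih =>
      obtain ⟨s, hs, U, hU, rfl⟩ := ih
      by_cases h : x ∈ U
      · -- `x` already divides the squarefree part, so a factor `x ^ 2` splits off.
        refine ⟨x ^ 2 * s, mul_mem (Submonoid.subset_closure ⟨x, hx, rfl⟩) hs, U.erase x,
          (Finset.erase_subset _ _).trans hU, ?_⟩
        rw [← Finset.mul_prod_erase U (fun t => t) h]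
        ring
      · refine ⟨s, hs, insert x U, Finset.insert_subset hx hU, ?_⟩
        rw [Finset.prod_insert h]
        ring
  intro x hx
  rw [← Subalgebra.mem_toSubmodule, Algebra.adjoin_eq_span] at hx
  induction hx using Submodule.span_induction with
  | mem x hx =>
    obtain ⟨s, hs, U, hU, rfl⟩ := hmon x hx
    exact hsq s hs _ (hB U hU)
  | zero => exact M.zero_mem
  | add x y _ _ hx hy => exact M.add_mem hx hy
  | smul a x _ hx => exact M.zsmul_mem hx a

/-- The diagonal matrix `diag(t, t⁻¹)`, with the value `1` at `t = 0`. -/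
def diagInv (t : F) : SL2 F :=
  open Classical in
  if h : t = 0 then 1 else ⟨!![t, 0; 0, t⁻¹], by simp [Matrix.det_fin_two_of, h]⟩

lemma coe_diagInv {t : F} (h : t ≠ 0) :
    (diagInv t : Matrix (Fin 2) (Fin 2) F) = !![t, 0; 0, t⁻¹] := by
  simp [diagInv, h]

lemma E12_sq_mul {t : F} (h : t ≠ 0) (r : F) :
    E12 (t ^ 2 * r) = diagInv t * E12 r * (diagInv t)⁻¹ := by
  rw [eq_mul_inv_iff_mul_eq]
  ext i j
  fin_cases i <;> fin_cases j <;>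
    simp [coe_E12, coe_diagInv h]
  field_simp

lemma E21_sq_mul {t : F} (h : t ≠ 0) (r : F) :
    E21 (t ^ 2 * r) = (diagInv t)⁻¹ * E21 r * diagInv t := by
  rw [mul_assoc, eq_inv_mul_iff_mul_eq]
  ext i j
  fin_cases i <;> fin_cases j <;>
    simp [coe_E21, coe_diagInv h]
  field_simp

/-- For a finitely generated ring `ℤ[T] ⊆ F`, the group `E₂(ℤ[T])`, which itself may fail to be
finitely generated, lies in a finitely generated subgroup of `SL₂(F)`. -/
lemma exists_fg_E2_le (T : Finset F) :
    ∃ Γ : Subgroup (SL2 F), Γ.FG ∧ E2 (Algebra.adjoin ℤ (T : Set F)).toSubring ≤ Γ := by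
  classical
  let B : Finset F := T.powerset.image fun U => ∏ t ∈ U, t
  let X : Finset (SL2 F) := T.image diagInv ∪ (B.image E12 ∪ B.image E21)
  let Γ : Subgroup (SL2 F) := Subgroup.closure (X : Set (SL2 F))
  have hX : ∀ g ∈ X, g ∈ Γ := fun g hg => Subgroup.subset_closure hg
  have hD : ∀ t ∈ T, diagInv t ∈ Γ := fun t ht =>
    hX _ (Finset.mem_union_left _ (Finset.mem_image_of_mem _ ht))
  have hB : ∀ U ⊆ T, ∏ t ∈ U, t ∈ B := fun U hU =>
    Finset.mem_image_of_mem (fun U : Finset F => ∏ t ∈ U, t) (Finset.mem_powerset.2 hU)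
  let M₁ : AddSubgroup F :=
    { carrier := {r | E12 r ∈ Γ}
      zero_mem' := by simp [E12_zero, Γ.one_mem]
      add_mem' := fun {a b} ha hb => by
        simp only [Set.mem_ofPred_eq, E12_add] at *
        exact Γ.mul_mem ha hb
      neg_mem' := fun {a} ha => by
        simp only [Set.mem_ofPred_eq, E12_neg] at *
        exact Γ.inv_mem ha }
  let M₂ : AddSubgroup F :=
    { carrier := {r | E21 r ∈ Γ}
      zero_mem' := by simp [E21_zero, Γ.one_mem]
      add_mem' := fun {a b} ha hb => by
        simp only [Set.mem_ofPred_eq, E21_add] at *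
        exact Γ.mul_mem ha hb
      neg_mem' := fun {a} ha => by
        simp only [Set.mem_ofPred_eq, E21_neg] at *
        exact Γ.inv_mem ha }
  have h₁ : ∀ x ∈ Algebra.adjoin ℤ (T : Set F), x ∈ M₁ := by
    refine adjoin_le_of_sq_mul_mem T M₁ (fun U hU => ?_) fun t ht r hr => ?_
    · exact hX _ (Finset.mem_union_right _
        (Finset.mem_union_left _ (Finset.mem_image_of_mem _ (hB U hU))))
    · by_cases h0 : t = 0
      · simp [h0, M₁.zero_mem]
      · change E12 (t ^ 2 * r) ∈ Γ
        rw [E12_sq_mul h0]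
        exact Γ.mul_mem (Γ.mul_mem (hD t ht) hr) (Γ.inv_mem (hD t ht))
  have h₂ : ∀ x ∈ Algebra.adjoin ℤ (T : Set F), x ∈ M₂ := by
    refine adjoin_le_of_sq_mul_mem T M₂ (fun U hU => ?_) fun t ht r hr => ?_
    · exact hX _ (Finset.mem_union_right _
        (Finset.mem_union_right _ (Finset.mem_image_of_mem _ (hB U hU))))
    · by_cases h0 : t = 0
      · simp [h0, M₂.zero_mem]
      · change E21 (t ^ 2 * r) ∈ Γ
        rw [E21_sq_mul h0]
        exact Γ.mul_mem (Γ.mul_mem (Γ.inv_mem (hD t ht)) hr) (hD t ht)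
  refine ⟨Γ, ⟨X, rfl⟩, (Subgroup.closure_le _).2 ?_⟩
  rintro g ⟨r, hr, rfl | rfl⟩
  · exact h₁ r hr
  · exact h₂ r hr

end FinitelyGenerated

/-- For a finitely generated integral domain `R` with fraction field `F`,
there exists a finitely generated group `Γ` with `SL₂(R) ≤ Γ ≤ SL₂(F)` if and only if there
exists a finitely generated `R`-subalgebra `S` of `F` with `SL₂(R) ≤ E₂(S)`. -/
theorem statement16 (R : Type*) [CommRing R] [IsDomain R] [Algebra.FiniteType ℤ R]
    (F : Type*) [Field F] [Algebra R F] [IsFractionRing R F] :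
    (∃ Γ : Subgroup (SL2 F), Γ.FG ∧
        (Matrix.SpecialLinearGroup.map (algebraMap R F)).range ≤ Γ) ↔
      (∃ S : Subalgebra R F, S.FG ∧
        (Matrix.SpecialLinearGroup.map (algebraMap R F)).range ≤ E2 S.toSubring) := by
  classical
  constructor
  · rintro ⟨Γ, ⟨X, rfl⟩, hΓ⟩
    choose A hA using exists_finset_mem_E2 (F := F)
    refine ⟨Algebra.adjoin R (X.biUnion A : Set F), ⟨X.biUnion A, rfl⟩,
      hΓ.trans ((Subgroup.closure_le _).2 fun g hg => hA g _ fun a ha => ?_)⟩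
    exact Algebra.subset_adjoin (Finset.mem_coe.2 (Finset.mem_biUnion.2 ⟨g, hg, ha⟩))
  · rintro ⟨S, hS, hle⟩
    have : Algebra.FiniteType R S := (Subalgebra.fg_iff_finiteType S).1 hS
    have hZ : Algebra.FiniteType ℤ S := Algebra.FiniteType.trans (S := R) inferInstance this
    have hfg : (S.restrictScalars ℤ).FG := (Subalgebra.fg_iff_finiteType _).2 hZ
    obtain ⟨T, hT⟩ := hfg
    obtain ⟨Γ, hΓ, hE⟩ := exists_fg_E2_le T
    refine ⟨Γ, hΓ, hle.trans (le_trans (E2_mono fun x hx => ?_) hE)⟩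
    rw [hT]
    exact hx
end
end
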